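/- arXiv:1503.00682 — 3 statements merged into one kernel-verified Lean document; each statement's English description precedes it below -/
import Mathlib

section
/- Let w₀ : [0,∞) → ℝ be continuously differentiable with w₀ and w₀′ bounded, w₀(0) = 0, and w₀′(s) < 0 for all s ≥ 0. For t > 0 and y ≥ 0 define w(t,y) := (1/(2√(πt))) ∫₀^∞ ( exp(−(y−s)²/(4t)) − exp(−(y+s)²/(4t)) ) w₀(s) ds. Then for every t > 0 the function y ↦ w(t,y) is differentiable on [0,∞) and ∂_y w(t,y) < 0 for every t > 0 and every y ≥ 0. -/
open MeasureTheory

/-- If `w₀` is continuously differentiable on `[0,∞)` with `w₀` and `w₀′`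
bounded, `w₀(0) = 0` and `w₀′ < 0` on `[0,∞)`, then the half-line Dirichlet heat
representation `w(t,·)` is differentiable on `[0,∞)` with `∂_y w(t,y) < 0` for every
`t > 0` and every `y ≥ 0`. -/
theorem halfline_heat_representation_deriv_negative
    (w₀ w₀' : ℝ → ℝ)
    (hderiv : ∀ s ∈ Set.Ici (0:ℝ), HasDerivWithinAt w₀ (w₀' s) (Set.Ici 0) s)
    (hderivcont : ContinuousOn w₀' (Set.Ici 0))
    (hbdd : ∃ M : ℝ, ∀ s : ℝ, 0 ≤ s → |w₀ s| ≤ M ∧ |w₀' s| ≤ M)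
    (hzero : w₀ 0 = 0)
    (hneg : ∀ s : ℝ, 0 ≤ s → w₀' s < 0)
    (w : ℝ → ℝ → ℝ)
    (hw : ∀ t y : ℝ, w t y = (1 / (2 * Real.sqrt (Real.pi * t))) *
      ∫ s in Set.Ioi (0:ℝ),
        (Real.exp (-(y - s)^2 / (4 * t)) - Real.exp (-(y + s)^2 / (4 * t))) * w₀ s) :
    ∀ t : ℝ, 0 < t → ∀ y : ℝ, 0 ≤ y →
      DifferentiableWithinAt ℝ (fun z => w t z) (Set.Ici 0) y ∧
      derivWithin (fun z => w t z) (Set.Ici 0) y < 0 := by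
  obtain ⟨M, hM⟩ := hbdd
  intro t ht y hy
  set g : ℝ → ℝ := fun s => w₀' |s| with hg
  have hgc : Continuous g :=
    hderivcont.comp_continuous continuous_abs (fun x => abs_nonneg x)
  have hgneg : ∀ x, g x < 0 := fun x => hneg _ (abs_nonneg x)
  have hgM : ∀ x, |g x| ≤ M := fun x => (hM _ (abs_nonneg x)).2
  set W : ℝ → ℝ := fun x => ∫ s in (0:ℝ)..x, g s with hWdef
  have hWd : ∀ x, HasDerivAt W (g x) x := fun x =>
    intervalIntegral.integral_hasDerivAt_right (hgc.intervalIntegrable _ _)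
      (hgc.stronglyMeasurableAtFilter _ _) hgc.continuousAt
  have hWc : Continuous W := continuous_iff_continuousAt.2 fun x => (hWd x).continuousAt
  have hWpos : ∀ x, 0 ≤ x → W x = w₀ x := by
    intro x hx
    have := intervalIntegral.integral_eq_sub_of_hasDeriv_right_of_le (f := w₀) (f' := g) hx
      (fun s hs => ((hderiv s hs.1).continuousWithinAt).mono (fun z hz => hz.1))
      (fun s hs => by
        have h1 := (hderiv s hs.1.le).mono (s := Set.Ioi s) (fun z hz => (hs.1.trans hz).le)
        simpa [hg, abs_of_pos hs.1] using h1)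
      (hgc.intervalIntegrable _ _)
    simp only [hWdef, this, hzero, sub_zero]
  have hWodd : ∀ x, W (-x) = - W x := by
    intro x
    have h := intervalIntegral.integral_comp_neg (a := 0) (b := x) g
    have h2 : ∀ s, g (-s) = g s := fun s => by simp [hg]
    simp only [h2, neg_zero] at h
    simp only [hWdef]
    rw [h, intervalIntegral.integral_symm]
  have hWM : ∀ x, |W x| ≤ M := by
    intro x
    rcases le_total 0 x with h | h
    · rw [hWpos x h]; exact (hM x h).1
    · have h' : 0 ≤ -x := by linarith
      rw [← abs_neg, ← hWodd, hWpos _ h']; exact (hM _ h').1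
  set E : ℝ → ℝ := fun u => Real.exp (-u^2 / (4 * t)) with hE
  have hEc : Continuous E := by simp only [hE]; fun_prop
  have hEpos : ∀ u, 0 < E u := fun u => Real.exp_pos _
  have hEi : Integrable E := by
    have := integrable_exp_neg_mul_sq (b := 1 / (4 * t)) (by positivity)
    refine this.congr (Filter.Eventually.of_forall fun u => ?_)
    simp only [hE]; congr 1; ring
  have hEven : ∀ u, E (-u) = E u := fun u => by simp [hE]
  have hint : ∀ (f h : ℝ → ℝ), Integrable f → Continuous h → (∀ x, |h x| ≤ M) →
      Integrable (fun x => f x * h x) := fun f h hf hh hb =>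
    hf.mul_bdd (c := M) hh.aestronglyMeasurable (Filter.Eventually.of_forall hb)
  have hrep : ∀ z, ∫ s in Set.Ioi (0:ℝ),
        (Real.exp (-(z - s)^2 / (4 * t)) - Real.exp (-(z + s)^2 / (4 * t))) * w₀ s
        = ∫ u, E u * W (z - u) := by
    intro z
    have hI : Integrable (fun s => E (z - s) * W s) :=
      hint _ _ (hEi.comp_sub_left z) hWc hWM
    have hI2 : Integrable (fun s => E (z - -s) * W (-s)) := hI.comp_neg
    have h1 : ∫ u, E u * W (z - u) = ∫ s, E (z - s) * W s := by
      rw [← integral_sub_left_eq_self (fun u => E u * W (z - u)) volume z]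
      simp
    rw [h1, ← intervalIntegral.integral_Iic_add_Ioi (b := 0) hI.integrableOn hI.integrableOn]
    have h2 := integral_comp_neg_Ioi (0:ℝ) (fun s => E (z - s) * W s)
    rw [neg_zero] at h2
    rw [← h2, ← integral_add hI2.integrableOn hI.integrableOn]
    refine setIntegral_congr_fun measurableSet_Ioi fun s hs => ?_
    simp only [hWodd, hWpos s (le_of_lt hs), hE, sub_neg_eq_add]
    ring
  have hD : HasDerivAt (fun z => ∫ u, E u * W (z - u)) (∫ u, E u * g (y - u)) y := by
    refine (hasDerivAt_integral_of_dominated_loc_of_deriv_le (s := Set.univ)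
      (F := fun z u => E u * W (z - u)) (F' := fun z u => E u * g (z - u))
      (bound := fun u => E u * M) Filter.univ_mem ?_ ?_ ?_ ?_ ?_ ?_).2
    · exact Filter.Eventually.of_forall fun z =>
        (hEc.mul (hWc.comp (continuous_const.sub continuous_id))).aestronglyMeasurable
    · exact hint _ _ hEi (hWc.comp (continuous_const.sub continuous_id)) (fun x => hWM _)
    · exact (hEc.mul (hgc.comp (continuous_const.sub continuous_id))).aestronglyMeasurable
    · refine Filter.Eventually.of_forall fun u z _ => ?_
      rw [norm_mul, Real.norm_of_nonneg (hEpos u).le]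
      exact mul_le_mul_of_nonneg_left (hgM _) (hEpos u).le
    · exact hEi.mul_const M
    · refine Filter.Eventually.of_forall fun u z _ => ?_
      exact ((hWd (z - u)).comp_sub_const z u).const_mul (E u)
  have hIneg : ∫ u, E u * g (y - u) < 0 := by
    have hI : Integrable (fun u => E u * g (y - u)) :=
      hint _ _ hEi (hgc.comp (continuous_const.sub continuous_id)) (fun x => hgM _)
    have hp : ∀ u, 0 < -(E u * g (y - u)) := fun u => by
      have := mul_neg_of_pos_of_neg (hEpos u) (hgneg (y - u)); linarith
    have : 0 < ∫ u, -(E u * g (y - u)) := by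
      rw [integral_pos_iff_support_of_nonneg (fun u => (hp u).le) hI.neg]
      have : Function.support (fun u => -(E u * g (y - u))) = Set.univ :=
        Set.eq_univ_of_forall fun u => (hp u).ne'
      rw [this]; simp
    rw [integral_neg] at this; linarith
  have hfun : (fun z => w t z) = fun z => (1 / (2 * Real.sqrt (Real.pi * t))) *
      ∫ u, E u * W (z - u) := by
    funext z; rw [hw, hrep]
  have hc : 0 < 1 / (2 * Real.sqrt (Real.pi * t)) := by
    have := Real.pi_pos
    positivity
  have hfin := (hD.const_mul (1 / (2 * Real.sqrt (Real.pi * t)))).hasDerivWithinAt (s := Set.Ici 0)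
  rw [hfun]
  refine ⟨hfin.differentiableWithinAt, ?_⟩
  rw [hfin.derivWithin (uniqueDiffOn_Ici 0 y hy)]
  exact mul_neg_of_pos_of_neg hc hIneg
end

section
/- Let β > 0 and let w : [0,∞) → ℝ be continuously differentiable with −β ≤ w(y) ≤ 0 and w′(y) < 0 for all y ≥ 0. Define u(y) := −e^{βy} ∫_y^∞ e^{−βs} w(s) ds. Then u is twice differentiable, u′(y) > 0 for every y ≥ 0, and u″(y) − β u′(y) = w′(y) < 0 for every y ≥ 0; consequently u″(y)/u′(y) < β for every y ≥ 0. -/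
open MeasureTheory

/-- For `β > 0` and `w` continuously differentiable with `−β ≤ w ≤ 0`
and `w′ < 0` on `[0,∞)`, the function `u(y) := −e^{βy} ∫_y^∞ e^{−βs} w(s) ds` is twice
differentiable on `[0,∞)`, `u′ > 0`, `u″ − βu′ = w′ < 0`, and consequently `u″/u′ < β`. -/
theorem shear_velocity_monotonicity
    (β : ℝ) (hβ : 0 < β)
    (w w' : ℝ → ℝ)
    (hderiv : ∀ s ∈ Set.Ici (0:ℝ), HasDerivWithinAt w (w' s) (Set.Ici 0) s)
    (hderivcont : ContinuousOn w' (Set.Ici 0))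
    (hbdd : ∀ y : ℝ, 0 ≤ y → -β ≤ w y ∧ w y ≤ 0)
    (hneg : ∀ y : ℝ, 0 ≤ y → w' y < 0)
    (u : ℝ → ℝ)
    (hu : ∀ y : ℝ, u y = -(Real.exp (β * y)) * ∫ s in Set.Ioi y, Real.exp (-β * s) * w s) :
    (∀ y ∈ Set.Ici (0:ℝ), DifferentiableWithinAt ℝ u (Set.Ici 0) y) ∧
    (∀ y ∈ Set.Ici (0:ℝ),
      DifferentiableWithinAt ℝ (derivWithin u (Set.Ici 0)) (Set.Ici 0) y) ∧
    (∀ y ∈ Set.Ici (0:ℝ), 0 < derivWithin u (Set.Ici 0) y) ∧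
    (∀ y ∈ Set.Ici (0:ℝ),
      derivWithin (derivWithin u (Set.Ici 0)) (Set.Ici 0) y
        - β * derivWithin u (Set.Ici 0) y = w' y ∧ w' y < 0) ∧
    (∀ y ∈ Set.Ici (0:ℝ),
      derivWithin (derivWithin u (Set.Ici 0)) (Set.Ici 0) y
        / derivWithin u (Set.Ici 0) y < β) := by
  have hwc : ContinuousOn w (Set.Ici 0) := fun s hs => (hderiv s hs).continuousWithinAt
  have hmono : StrictAntiOn w (Set.Ici 0) := by
    apply strictAntiOn_of_deriv_neg (convex_Ici 0) hwc
    intro x hx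
    rw [interior_Ici] at hx
    have h1 := (hderiv x (Set.mem_Ici.2 (le_of_lt hx))).hasDerivAt (Ici_mem_nhds hx)
    rw [h1.deriv]
    exact hneg x (le_of_lt hx)
  set g : ℝ → ℝ := fun s => Real.exp (-β * s) * w (max s 0) with hg
  have hWc : Continuous (fun s : ℝ => w (max s 0)) := by
    apply hwc.comp_continuous (by fun_prop)
    intro x
    exact Set.mem_Ici.2 (le_max_right _ _)
  have hgc : Continuous g := by
    apply Continuous.mul (by fun_prop) hWc
  have hexp : ∀ y : ℝ, IntegrableOn (fun s => Real.exp (-β * s)) (Set.Ioi y) := fun y =>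
    integrableOn_exp_mul_Ioi (by linarith) y
  have hgi : ∀ y : ℝ, IntegrableOn g (Set.Ioi y) := by
    intro y
    refine Integrable.mono' ((hexp y).const_mul β) hgc.aestronglyMeasurable ?_
    refine Filter.Eventually.of_forall fun s => ?_
    have h := hbdd (max s 0) (le_max_right _ _)
    have he := Real.exp_pos (-β * s)
    have : |w (max s 0)| ≤ β := abs_le.2 ⟨h.1, by linarith⟩
    simp only [hg, Real.norm_eq_abs, abs_mul, abs_of_pos he]
    nlinarith
  have hcongr : ∀ y : ℝ, 0 ≤ y →
      ∫ s in Set.Ioi y, Real.exp (-β * s) * w s = ∫ s in Set.Ioi y, g s := by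
    intro y hy
    refine setIntegral_congr_fun measurableSet_Ioi fun s hs => ?_
    have : (0:ℝ) ≤ s := hy.trans (le_of_lt hs)
    simp only [hg, max_eq_left this]
  have hu2 : ∀ y ∈ Set.Ici (0:ℝ), u y =
      -(Real.exp (β * y)) * ((∫ s in Set.Ioi 0, g s) - ∫ s in (0:ℝ)..y, g s) := by
    intro y hy
    rw [hu y, hcongr y hy]
    rw [← intervalIntegral.integral_Ioi_sub_Ioi (hgi 0) hy]
    ring
  have hD : ∀ y ∈ Set.Ici (0:ℝ), HasDerivWithinAt u (β * u y + w y) (Set.Ici 0) y := by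
    intro y hy
    have h1 : HasDerivAt (fun y => ∫ s in (0:ℝ)..y, g s) (g y) y :=
      intervalIntegral.integral_hasDerivAt_right (hgc.intervalIntegrable _ _)
        (hgc.stronglyMeasurableAtFilter _ _) hgc.continuousAt
    have h2 : HasDerivAt (fun y => -(Real.exp (β * y))) (-(Real.exp (β * y) * (β * 1))) y :=
      (((hasDerivAt_id y).const_mul β).exp).neg
    have h3 := (h2.mul (h1.const_sub (∫ s in Set.Ioi 0, g s))).hasDerivWithinAt (s := Set.Ici 0)
    have h4 := h3.congr (f₁ := u) (fun x hx => hu2 x hx) (hu2 y hy)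
    refine h4.congr_deriv ?_
    rw [hu2 y hy]
    have he : Real.exp (β * y) * Real.exp (-β * y) = 1 := by
      rw [← Real.exp_add]; simp
    have hm : max y 0 = y := max_eq_left hy
    simp only [hg, hm]
    linear_combination (w y) * he
  have hud : UniqueDiffOn ℝ (Set.Ici (0:ℝ)) := uniqueDiffOn_Ici 0
  have hd1 : ∀ y ∈ Set.Ici (0:ℝ), derivWithin u (Set.Ici 0) y = β * u y + w y :=
    fun y hy => (hD y hy).derivWithin (hud y hy)
  have hD2 : ∀ y ∈ Set.Ici (0:ℝ), HasDerivWithinAt (derivWithin u (Set.Ici 0))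
      (β * (β * u y + w y) + w' y) (Set.Ici 0) y := by
    intro y hy
    exact (((hD y hy).const_mul β).add (hderiv y hy)).congr (fun x hx => hd1 x hx) (hd1 y hy)
  have hd2 : ∀ y ∈ Set.Ici (0:ℝ), derivWithin (derivWithin u (Set.Ici 0)) (Set.Ici 0) y
      = β * (β * u y + w y) + w' y :=
    fun y hy => (hD2 y hy).derivWithin (hud y hy)
  have hpos : ∀ y ∈ Set.Ici (0:ℝ), 0 < β * u y + w y := by
    intro y hy
    have hpt : ∀ s ∈ Set.Ioi y, 0 < Real.exp (-β * s) * w y - g s := by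
      intro s hs
      have hs0 : (0:ℝ) ≤ s := le_trans hy (le_of_lt hs)
      have hlt : w s < w y := hmono hy hs0 hs
      simp only [hg, max_eq_left hs0]
      have := mul_lt_mul_of_pos_left hlt (Real.exp_pos (-β * s))
      linarith
    have hint : IntegrableOn (fun s => Real.exp (-β * s) * w y - g s) (Set.Ioi y) :=
      ((hexp y).mul_const (w y)).sub (hgi y)
    have hI : 0 < ∫ s in Set.Ioi y, (Real.exp (-β * s) * w y - g s) := by
      rw [setIntegral_pos_iff_support_of_nonneg_ae _ hint]
      · have : Function.support (fun s => Real.exp (-β * s) * w y - g s) ∩ Set.Ioi y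
            = Set.Ioi y := Set.inter_eq_right.2 fun s hs => (hpt s hs).ne'
        rw [this]; simp
      · exact (ae_restrict_iff' measurableSet_Ioi).2
          (Filter.Eventually.of_forall fun s hs => (hpt s hs).le)
    rw [integral_sub ((hexp y).mul_const (w y)) (hgi y), integral_mul_const,
      integral_exp_mul_Ioi (by linarith) y] at hI
    rw [hu y, hcongr y hy]
    have he : Real.exp (β * y) * Real.exp (-β * y) = 1 := by
      rw [← Real.exp_add]; simp
    have h5 := mul_pos (mul_pos hβ (Real.exp_pos (β * y))) hI
    have h6 : β * Real.exp (β * y) * (-Real.exp (-β * y) / -β * w y - ∫ s in Set.Ioi y, g s)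
        = β * (-(Real.exp (β * y)) * ∫ s in Set.Ioi y, g s) + w y := by
      have : -Real.exp (-β * y) / -β = Real.exp (-β * y) * β⁻¹ := by
        rw [neg_div_neg_eq, div_eq_mul_inv]
      rw [this]
      have hb : β * β⁻¹ = 1 := mul_inv_cancel₀ hβ.ne'
      linear_combination (w y * β * β⁻¹) * he + w y * hb
    linarith
  refine ⟨fun y hy => (hD y hy).differentiableWithinAt,
    fun y hy => (hD2 y hy).differentiableWithinAt, fun y hy => ?_, fun y hy => ⟨?_, hneg y hy⟩,
    fun y hy => ?_⟩
  · rw [hd1 y hy]; exact hpos y hy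
  · rw [hd1 y hy, hd2 y hy]; ring
  · rw [hd1 y hy, hd2 y hy, div_lt_iff₀ (hpos y hy)]
    linarith [hneg y hy]
end

section
/- Let u, v, ũ, ṽ, f : ℝ³ → ℝ be infinitely differentiable functions of (t,x,y). Assume at every point: ∂_y ũ > 0; ∂ₓu + ∂_y v = 0; ∂ₓũ + ∂_y ṽ = 0; and ∂ₜu + ũ ∂ₓu + ṽ ∂_y u + u ∂ₓũ + v ∂_y ũ − ∂_y∂_y u = f. Define w := ∂_y( u/∂_y ũ ), η := ∂_y∂_y ũ / ∂_y ũ, f̃ := f/∂_y ũ, and ζ := ( (∂ₜ + ũ ∂ₓ + ṽ ∂_y − ∂_y∂_y)(∂_y ũ) ) / ∂_y ũ. Then at every point: ∂ₜw + ∂ₓ(ũ w) + ∂_y(ṽ w) − 2 ∂_y(η w) + ∂_y( (u/∂_y ũ) · ζ ) − ∂_y∂_y w = ∂_y f̃. -/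
/-- Partial derivative in the time variable of a function of `(t,x,y)`. -/
noncomputable def Dt3 (f : ℝ → ℝ → ℝ → ℝ) : ℝ → ℝ → ℝ → ℝ :=
  fun t x y => deriv (fun τ => f τ x y) t

/-- Partial derivative in the tangential variable of a function of `(t,x,y)`. -/
noncomputable def Dx3 (f : ℝ → ℝ → ℝ → ℝ) : ℝ → ℝ → ℝ → ℝ :=
  fun t x y => deriv (fun ξ => f t ξ y) x

/-- Partial derivative in the normal variable of a function of `(t,x,y)`. -/
noncomputable def Dy3 (f : ℝ → ℝ → ℝ → ℝ) : ℝ → ℝ → ℝ → ℝ :=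
  fun t x y => deriv (fun z => f t x z) y

/-- Smoothness of the uncurried function. -/
def Sm3 (F : ℝ → ℝ → ℝ → ℝ) : Prop :=
  ContDiff ℝ (⊤ : ℕ∞) (fun p : ℝ × ℝ × ℝ => F p.1 p.2.1 p.2.2)

lemma Sm3.hasT {F : ℝ → ℝ → ℝ → ℝ} (h : Sm3 F) (t x y : ℝ) :
    HasDerivAt (fun s => F s x y)
      (fderiv ℝ (fun p : ℝ × ℝ × ℝ => F p.1 p.2.1 p.2.2) (t, x, y) (1, 0, 0)) t := by
  have h1 := (h.differentiable (by simp) (t, x, y)).hasFDerivAt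
  have h2 : HasDerivAt (fun s : ℝ => (s, x, y)) ((1 : ℝ), (0 : ℝ), (0 : ℝ)) t :=
    (hasDerivAt_id t).prodMk ((hasDerivAt_const t x).prodMk (hasDerivAt_const t y))
  exact h1.comp_hasDerivAt t h2

lemma Sm3.hasX {F : ℝ → ℝ → ℝ → ℝ} (h : Sm3 F) (t x y : ℝ) :
    HasDerivAt (fun s => F t s y)
      (fderiv ℝ (fun p : ℝ × ℝ × ℝ => F p.1 p.2.1 p.2.2) (t, x, y) (0, 1, 0)) x := by
  have h1 := (h.differentiable (by simp) (t, x, y)).hasFDerivAt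
  have h2 : HasDerivAt (fun s : ℝ => (t, s, y)) ((0 : ℝ), (1 : ℝ), (0 : ℝ)) x :=
    (hasDerivAt_const x t).prodMk ((hasDerivAt_id x).prodMk (hasDerivAt_const x y))
  exact h1.comp_hasDerivAt x h2

lemma Sm3.hasY {F : ℝ → ℝ → ℝ → ℝ} (h : Sm3 F) (t x y : ℝ) :
    HasDerivAt (fun s => F t x s)
      (fderiv ℝ (fun p : ℝ × ℝ × ℝ => F p.1 p.2.1 p.2.2) (t, x, y) (0, 0, 1)) y := by
  have h1 := (h.differentiable (by simp) (t, x, y)).hasFDerivAt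
  have h2 : HasDerivAt (fun s : ℝ => (t, x, s)) ((0 : ℝ), (0 : ℝ), (1 : ℝ)) y :=
    (hasDerivAt_const y t).prodMk ((hasDerivAt_const y x).prodMk (hasDerivAt_id y))
  exact h1.comp_hasDerivAt y h2

lemma Sm3.dirSmooth {F : ℝ → ℝ → ℝ → ℝ} (h : Sm3 F) (e : ℝ × ℝ × ℝ) :
    ContDiff ℝ (⊤ : ℕ∞)
      (fun p => fderiv ℝ (fun p : ℝ × ℝ × ℝ => F p.1 p.2.1 p.2.2) p e) :=
  (h.fderiv_right (m := (⊤ : ℕ∞)) (by simp)).clm_apply contDiff_const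

lemma Sm3.eqT {F : ℝ → ℝ → ℝ → ℝ} (h : Sm3 F) :
    (fun p : ℝ × ℝ × ℝ => Dt3 F p.1 p.2.1 p.2.2) =
      fun p => fderiv ℝ (fun p : ℝ × ℝ × ℝ => F p.1 p.2.1 p.2.2) p (1, 0, 0) := by
  funext p; exact (h.hasT p.1 p.2.1 p.2.2).deriv

lemma Sm3.eqX {F : ℝ → ℝ → ℝ → ℝ} (h : Sm3 F) :
    (fun p : ℝ × ℝ × ℝ => Dx3 F p.1 p.2.1 p.2.2) =
      fun p => fderiv ℝ (fun p : ℝ × ℝ × ℝ => F p.1 p.2.1 p.2.2) p (0, 1, 0) := by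
  funext p; exact (h.hasX p.1 p.2.1 p.2.2).deriv

lemma Sm3.eqY {F : ℝ → ℝ → ℝ → ℝ} (h : Sm3 F) :
    (fun p : ℝ × ℝ × ℝ => Dy3 F p.1 p.2.1 p.2.2) =
      fun p => fderiv ℝ (fun p : ℝ × ℝ × ℝ => F p.1 p.2.1 p.2.2) p (0, 0, 1) := by
  funext p; exact (h.hasY p.1 p.2.1 p.2.2).deriv

lemma Sm3.t {F : ℝ → ℝ → ℝ → ℝ} (h : Sm3 F) : Sm3 (Dt3 F) := by
  unfold Sm3; rw [h.eqT]; exact h.dirSmooth _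

lemma Sm3.x {F : ℝ → ℝ → ℝ → ℝ} (h : Sm3 F) : Sm3 (Dx3 F) := by
  unfold Sm3; rw [h.eqX]; exact h.dirSmooth _

lemma Sm3.y {F : ℝ → ℝ → ℝ → ℝ} (h : Sm3 F) : Sm3 (Dy3 F) := by
  unfold Sm3; rw [h.eqY]; exact h.dirSmooth _

lemma snd_symm3 {G : ℝ × ℝ × ℝ → ℝ} (h : ContDiff ℝ (⊤ : ℕ∞) G) (p a b : ℝ × ℝ × ℝ) :
    fderiv ℝ (fun q => fderiv ℝ G q a) p b = fderiv ℝ (fun q => fderiv ℝ G q b) p a := by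
  have hd : DifferentiableAt ℝ (fderiv ℝ G) p :=
    (h.fderiv_right (m := (⊤ : ℕ∞)) (by simp)).differentiable (by simp) p
  have hs : IsSymmSndFDerivAt ℝ G p := h.contDiffAt.isSymmSndFDerivAt (by
    simp only [minSmoothness_of_isRCLikeNormedField]; exact WithTop.coe_le_coe.2 (le_top (a := (2 : ℕ∞))))
  have key : ∀ c d : ℝ × ℝ × ℝ,
      fderiv ℝ (fun q => fderiv ℝ G q c) p d = fderiv ℝ (fderiv ℝ G) p d c := by
    intro c d
    rw [fderiv_clm_apply hd (differentiableAt_const c)]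
    simp
  rw [key, key]
  exact hs b a

lemma Sm3.commT {F : ℝ → ℝ → ℝ → ℝ} (h : Sm3 F) (t x y : ℝ) :
    Dy3 (Dt3 F) t x y = Dt3 (Dy3 F) t x y := by
  have h1 := congrFun h.t.eqY (t, x, y)
  have h2 := congrFun h.y.eqT (t, x, y)
  rw [h.eqT] at h1
  rw [h.eqY] at h2
  exact h1.trans ((snd_symm3 h _ _ _).trans h2.symm)

lemma Sm3.commX {F : ℝ → ℝ → ℝ → ℝ} (h : Sm3 F) (t x y : ℝ) :
    Dy3 (Dx3 F) t x y = Dx3 (Dy3 F) t x y := by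
  have h1 := congrFun h.x.eqY (t, x, y)
  have h2 := congrFun h.y.eqX (t, x, y)
  rw [h.eqX] at h1
  rw [h.eqY] at h2
  exact h1.trans ((snd_symm3 h _ _ _).trans h2.symm)

lemma Sm3.dT {F : ℝ → ℝ → ℝ → ℝ} (h : Sm3 F) (t x y : ℝ) :
    HasDerivAt (fun s => F s x y) (Dt3 F t x y) t :=
  (h.hasT t x y).differentiableAt.hasDerivAt

lemma Sm3.dX {F : ℝ → ℝ → ℝ → ℝ} (h : Sm3 F) (t x y : ℝ) :
    HasDerivAt (fun s => F t s y) (Dx3 F t x y) x :=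
  (h.hasX t x y).differentiableAt.hasDerivAt

lemma Sm3.dY {F : ℝ → ℝ → ℝ → ℝ} (h : Sm3 F) (t x y : ℝ) :
    HasDerivAt (fun s => F t x s) (Dy3 F t x y) y :=
  (h.hasY t x y).differentiableAt.hasDerivAt

/-- Interior part of Lemma 3.1: if `(u,v)` solves the linearized
Prandtl-type equation around `(ub, vb)` with force `f`, both velocity fields are
divergence free and `∂_y ub > 0`, then `w := ∂_y(u/∂_y ub)` satisfies
`∂ₜw + ∂ₓ(ub·w) + ∂_y(vb·w) − 2∂_y(η·w) + ∂_y((u/∂_y ub)·ζ) − ∂_y∂_y w = ∂_y f̃`. -/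
theorem linearized_prandtl_vorticity_equation
    (u v ub vb f : ℝ → ℝ → ℝ → ℝ)
    (hsm_u : ContDiff ℝ (⊤ : ℕ∞) (fun p : ℝ × ℝ × ℝ => u p.1 p.2.1 p.2.2))
    (hsm_v : ContDiff ℝ (⊤ : ℕ∞) (fun p : ℝ × ℝ × ℝ => v p.1 p.2.1 p.2.2))
    (hsm_ub : ContDiff ℝ (⊤ : ℕ∞) (fun p : ℝ × ℝ × ℝ => ub p.1 p.2.1 p.2.2))
    (hsm_vb : ContDiff ℝ (⊤ : ℕ∞) (fun p : ℝ × ℝ × ℝ => vb p.1 p.2.1 p.2.2))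
    (hsm_f : ContDiff ℝ (⊤ : ℕ∞) (fun p : ℝ × ℝ × ℝ => f p.1 p.2.1 p.2.2))
    (hmono : ∀ t x y : ℝ, 0 < Dy3 ub t x y)
    (hdiv : ∀ t x y : ℝ, Dx3 u t x y + Dy3 v t x y = 0)
    (hdivb : ∀ t x y : ℝ, Dx3 ub t x y + Dy3 vb t x y = 0)
    (heq : ∀ t x y : ℝ,
      Dt3 u t x y + ub t x y * Dx3 u t x y + vb t x y * Dy3 u t x y
        + u t x y * Dx3 ub t x y + v t x y * Dy3 ub t x y - Dy3 (Dy3 u) t x y = f t x y)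
    (w η ft ζ : ℝ → ℝ → ℝ → ℝ)
    (hw : ∀ t x y : ℝ, w t x y = Dy3 (fun a b c => u a b c / Dy3 ub a b c) t x y)
    (hη : ∀ t x y : ℝ, η t x y = Dy3 (Dy3 ub) t x y / Dy3 ub t x y)
    (hft : ∀ t x y : ℝ, ft t x y = f t x y / Dy3 ub t x y)
    (hζ : ∀ t x y : ℝ, ζ t x y =
      (Dt3 (Dy3 ub) t x y + ub t x y * Dx3 (Dy3 ub) t x y
        + vb t x y * Dy3 (Dy3 ub) t x y - Dy3 (Dy3 (Dy3 ub)) t x y) / Dy3 ub t x y) :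
    ∀ t x y : ℝ,
      Dt3 w t x y
        + Dx3 (fun a b c => ub a b c * w a b c) t x y
        + Dy3 (fun a b c => vb a b c * w a b c) t x y
        - 2 * Dy3 (fun a b c => η a b c * w a b c) t x y
        + Dy3 (fun a b c => (u a b c / Dy3 ub a b c) * ζ a b c) t x y
        - Dy3 (Dy3 w) t x y
      = Dy3 ft t x y := by
  have su : Sm3 u := hsm_u
  have sv : Sm3 v := hsm_v
  have sub : Sm3 ub := hsm_ub
  have svb : Sm3 vb := hsm_vb
  have sf : Sm3 f := hsm_f
  have sg : Sm3 (Dy3 ub) := sub.y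
  have sd : ∀ {F : ℝ → ℝ → ℝ → ℝ}, Sm3 F → Sm3 (fun a b c => F a b c / Dy3 ub a b c) :=
    fun {F} hF => ContDiff.div hF sg (fun p => (hmono p.1 p.2.1 p.2.2).ne')
  obtain ⟨q, hq⟩ : ∃ q : ℝ → ℝ → ℝ → ℝ, q = fun a b c => u a b c / Dy3 ub a b c := ⟨_, rfl⟩
  have sq : Sm3 q := hq ▸ sd su
  have hqp : ∀ a b c, u a b c / Dy3 ub a b c = q a b c := fun a b c => by rw [hq]
  have hu : u = fun a b c => q a b c * Dy3 ub a b c := by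
    funext a b c
    rw [hq]
    field_simp [(hmono a b c).ne']
  have hw' : w = Dy3 q := by
    funext a b c
    rw [hw, hq]
  have sw : Sm3 w := hw' ▸ sq.y
  have hη' : η = fun a b c => Dy3 (Dy3 ub) a b c / Dy3 ub a b c := by
    funext a b c
    exact hη a b c
  have sη : Sm3 η := hη' ▸ sd sg.y
  have hζ' : ζ = fun t x y => (Dt3 (Dy3 ub) t x y + ub t x y * Dx3 (Dy3 ub) t x y
        + vb t x y * Dy3 (Dy3 ub) t x y - Dy3 (Dy3 (Dy3 ub)) t x y) / Dy3 ub t x y := by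
    funext a b c
    exact hζ a b c
  have sζ : Sm3 ζ := by
    rw [hζ']
    refine sd (F := fun t x y => Dt3 (Dy3 ub) t x y + ub t x y * Dx3 (Dy3 ub) t x y
        + vb t x y * Dy3 (Dy3 ub) t x y - Dy3 (Dy3 (Dy3 ub)) t x y) ?_
    exact ((ContDiff.add sg.t (ContDiff.mul sub sg.x)).add (ContDiff.mul svb sg.y)).sub sg.y.y
  have sqζ : Sm3 (fun a b c => q a b c * ζ a b c) := ContDiff.mul sq sζ
  have sηw : Sm3 (fun a b c => η a b c * w a b c) := ContDiff.mul sη sw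
  -- first derivatives of u
  have ut : ∀ a b c, Dt3 u a b c
      = Dt3 q a b c * Dy3 ub a b c + q a b c * Dt3 (Dy3 ub) a b c := by
    intro a b c
    rw [hu]
    exact ((sq.dT a b c).mul (sg.dT a b c)).deriv
  have ux : ∀ a b c, Dx3 u a b c
      = Dx3 q a b c * Dy3 ub a b c + q a b c * Dx3 (Dy3 ub) a b c := by
    intro a b c
    rw [hu]
    exact ((sq.dX a b c).mul (sg.dX a b c)).deriv
  have uy : Dy3 u = fun a b c =>
      w a b c * Dy3 ub a b c + q a b c * Dy3 (Dy3 ub) a b c := by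
    funext a b c
    rw [hu, hw']
    exact ((sq.dY a b c).mul (sg.dY a b c)).deriv
  have uyy : ∀ a b c, Dy3 (Dy3 u) a b c
      = (Dy3 w a b c * Dy3 ub a b c + w a b c * Dy3 (Dy3 ub) a b c)
        + (w a b c * Dy3 (Dy3 ub) a b c + q a b c * Dy3 (Dy3 (Dy3 ub)) a b c) := by
    intro a b c
    rw [uy]
    have := ((sw.dY a b c).mul (sg.dY a b c)).add ((sq.dY a b c).mul (sg.y.dY a b c))
    rw [← hw'] at this
    exact this.deriv
  -- the divided equation
  have hft' : ft = fun a b c => Dt3 q a b c + ub a b c * Dx3 q a b c + vb a b c * w a b c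
      + q a b c * ζ a b c + q a b c * Dx3 ub a b c + v a b c - Dy3 w a b c
      - 2 * (η a b c * w a b c) := by
    funext a b c
    have hg := (hmono a b c).ne'
    have hu0 : u a b c = q a b c * Dy3 ub a b c := by rw [hu]
    have huy0 := congrFun (congrFun (congrFun uy a) b) c
    have e := heq a b c
    rw [uyy, huy0, ut, ux, hu0] at e
    rw [hft, hη, hζ, ← e]
    field_simp
    ring
  intro t x y
  simp only [hqp]
  have hx : Dx3 (fun a b c => ub a b c * w a b c) t x y
      = Dx3 ub t x y * w t x y + ub t x y * Dx3 w t x y :=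
    ((sub.dX t x y).mul (sw.dX t x y)).deriv
  have hy : Dy3 (fun a b c => vb a b c * w a b c) t x y
      = Dy3 vb t x y * w t x y + vb t x y * Dy3 w t x y :=
    ((svb.dY t x y).mul (sw.dY t x y)).deriv
  have hF : Dy3 ft t x y = Dy3 (Dt3 q) t x y
      + (Dy3 ub t x y * Dx3 q t x y + ub t x y * Dy3 (Dx3 q) t x y)
      + (Dy3 vb t x y * w t x y + vb t x y * Dy3 w t x y)
      + Dy3 (fun a b c => q a b c * ζ a b c) t x y
      + (Dy3 q t x y * Dx3 ub t x y + q t x y * Dy3 (Dx3 ub) t x y)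
      + Dy3 v t x y - Dy3 (Dy3 w) t x y
      - 2 * Dy3 (fun a b c => η a b c * w a b c) t x y := by
    rw [hft']
    exact ((((((((sq.t.dY t x y).add ((sub.dY t x y).mul (sq.x.dY t x y))).add
      ((svb.dY t x y).mul (sw.dY t x y))).add (sqζ.dY t x y)).add
      ((sq.dY t x y).mul (sub.x.dY t x y))).add (sv.dY t x y)).sub (sw.y.dY t x y)).sub
      ((sηw.dY t x y).const_mul 2)).deriv
  rw [hF, hx, hy, sq.commT, sq.commX, sub.commX, ← hw']
  have d1 := hdiv t x y
  rw [ux] at d1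
  have d2 := hdivb t x y
  linear_combination (-1 : ℝ) * d1
end
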